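/- Let D=(V,A) be a semicomplete digraph on n vertices, let k ∈ ℕ, and let t ∈ [n]. Then the number of t-valid triples (Y,Z,S) is at most 2^{8k+2}. -/

import Mathlib

open Set

/-- A (loopless) digraph given by its arc relation `A` is *semicomplete* if between
any two distinct vertices there is at least one arc. -/
def Semicomplete {V : Type*} (A : V → V → Prop) : Prop :=
  Irreflexive A ∧ ∀ x y : V, x ≠ y → A x y ∨ A y x

/-- Reachability (by a directed path) inside the subdigraph induced on the vertex set `W`. -/
def DReach {V : Type*} (A : V → V → Prop) (W : Set V) : V → V → Prop :=
  Relation.ReflTransGen fun a b => a ∈ W ∧ b ∈ W ∧ A a b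

/-- The vertex set of the strongly connected component of `v` in the
subdigraph induced on the vertex set `W`. -/
def dscc {V : Type*} (A : V → V → Prop) (W : Set V) (v : V) : Set V :=
  {u | u ∈ W ∧ DReach A W v u ∧ DReach A W u v}

/-- `C` is the vertex set of a strongly connected component of the subdigraph induced on `W`. -/
def IsSccSet {V : Type*} (A : V → V → Prop) (W : Set V) (C : Set V) : Prop :=
  ∃ v ∈ W, C = dscc A W v

/-- `mco`: the maximum number of vertices in a strongly connected component of the
subdigraph induced on `W`. -/
noncomputable def mco {V : Type*} (A : V → V → Prop) (W : Set V) : ℕ :=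
  sSup {n | ∃ v ∈ W, n = (dscc A W v).ncard}

/-- Out-degree of `v`. -/
noncomputable def outDeg {V : Type*} (A : V → V → Prop) (v : V) : ℕ := {u | A v u}.ncard

/-- In-degree of `v`. -/
noncomputable def inDeg {V : Type*} (A : V → V → Prop) (v : V) : ℕ := {u | A u v}.ncard

/-- `S` covers all arcs from `Z` to `Y`. -/
def ArcCover {V : Type*} (A : V → V → Prop) (Y Z S : Set V) : Prop :=
  ∀ y ∈ Y, ∀ z ∈ Z, A z y → y ∈ S ∨ z ∈ S

/-- A triple `(Y,Z,S)` is `t`-valid (with respect to the digraph `A` and parameter `k`). -/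
def TValid {V : Type*} [Fintype V] (A : V → V → Prop) (k t : ℕ) (Y Z S : Set V) : Prop :=
  Y ∪ Z = Set.univ ∧ Disjoint Y Z ∧ Y.ncard = t ∧
  ArcCover A Y Z S ∧ (∀ S' ⊆ S, ArcCover A Y Z S' → S' = S) ∧
  S.ncard ≤ k ∧
  (∀ x ∈ S, Fintype.card V - t + k < outDeg A x → x ∈ Y) ∧
  (∀ x ∈ S, t + k < inDeg A x → x ∈ Z)

/-- The weight `w((Y1,Z1,S1),(Y2,Z2,S2)) = |S1 \ S2| + max (0, |(Z1 ∩ Y2) \ (S1 ∪ S2)| - ℓ)`. -/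
noncomputable def wt {V : Type*} (ℓ : ℕ) (Z1 S1 Y2 S2 : Set V) : ℕ :=
  (S1 \ S2).ncard + (((Z1 ∩ Y2) \ (S1 ∪ S2)).ncard - ℓ)

/-- Compatibility of a pair of valid triples. -/
def Compat {V : Type*} (ℓ k : ℕ) (Y1 Z1 S1 Y2 Z2 S2 : Set V) : Prop :=
  Y1 ⊂ Y2 ∧ (∀ x ∈ S1 ∩ Z1, x ∈ Z2 → x ∈ S2) ∧ (Y1 \ S1 ⊆ Y2 \ S2) ∧
  wt ℓ Z1 S1 Y2 S2 ≤ k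

theorem Semicomplete.flip {V : Type*} {A : V → V → Prop} (hA : Semicomplete A) :
    Semicomplete (flip A) :=
  ⟨fun x => hA.1 x, fun x y h => (hA.2 x y h).symm⟩

/-- A nonempty vertex set of a semicomplete digraph has a vertex dominating at least half of
the others. -/
theorem Semicomplete.exists_card_le_two_mul_out {V : Type*} {A : V → V → Prop}
    [DecidableRel A] (hA : Semicomplete A) {W : Finset V} (hW : W.Nonempty) :
    ∃ v ∈ W, W.card ≤ 2 * (W.filter (A v)).card + 1 := by
  classical
  by_contra! h
  have hlt := Finset.sum_lt_sum_of_nonempty hW h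
  have hswap : ∑ v ∈ W, (W.filter (A v)).card = ∑ v ∈ W, (W.filter fun u => A u v).card :=
    Finset.sum_card_bipartiteAbove_eq_sum_card_bipartiteBelow A
  have hle : ∑ _v ∈ W, W.card ≤
      ∑ v ∈ W, ((W.filter (A v)).card + (W.filter fun u => A u v).card + 1) := by
    refine Finset.sum_le_sum fun v _ => ?_
    have hsub : W ⊆ insert v (W.filter (A v) ∪ W.filter fun u => A u v) := by
      intro u hu
      by_cases huv : u = v
      · simp [huv]
      · have := hA.2 u v huv
        simp only [Finset.mem_insert, Finset.mem_union, Finset.mem_filter]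
        tauto
    have h1 := Finset.card_le_card hsub
    have h2 := Finset.card_insert_le v (W.filter (A v) ∪ W.filter fun u => A u v)
    have h3 := Finset.card_union_le (W.filter (A v)) (W.filter fun u => A u v)
    omega
  simp only [Finset.sum_add_distrib, ← Finset.mul_sum] at hlt hle
  omega

/-- A set of vertices of out-degree at most `m` all dominating `X` is small. -/
theorem Semicomplete.ncard_le_of_dominates {V : Type*} [Finite V] {A : V → V → Prop}
    (hA : Semicomplete A) {W X : Set V} {m : ℕ} (hW : W.Nonempty) (hWX : Disjoint W X)
    (hdom : ∀ v ∈ W, ∀ x ∈ X, A v x) (hdeg : ∀ v ∈ W, outDeg A v ≤ m) :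
    W.ncard + 2 * X.ncard ≤ 2 * m + 1 := by
  classical
  obtain ⟨F, rfl⟩ := W.toFinite.exists_finset_coe
  obtain ⟨v, hv, hcard⟩ := hA.exists_card_le_two_mul_out (W := F) (by simpa using hW)
  have hsub : (↑(F.filter (A v)) ∪ X : Set V) ⊆ {u | A v u} := by
    rintro u (hu | hu)
    · exact (Finset.mem_filter.1 hu).2
    · exact hdom v hv u hu
  have hdisj : Disjoint (↑(F.filter (A v)) : Set V) X :=
    hWX.mono_left (by exact_mod_cast Finset.filter_subset _ _)
  have h1 := Set.ncard_le_ncard hsub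
  rw [Set.ncard_union_eq hdisj, Set.ncard_coe_finset] at h1
  have h2 : outDeg A v ≤ m := hdeg v hv
  unfold outDeg at h2
  rw [Set.ncard_coe_finset]
  omega

/-- There are at most `2 ^ j` minimal covers extending `X` by at most `j` vertices. -/
theorem ncard_minimal_arcCover_le {V : Type*} [Finite V] (A : V → V → Prop) (Y Z : Set V)
    (j : ℕ) (X : Set V) :
    {S : Set V | X ⊆ S ∧ ArcCover A Y Z S ∧ (∀ S' ⊆ S, ArcCover A Y Z S' → S' = S) ∧
      S.ncard ≤ X.ncard + j}.ncard ≤ 2 ^ j := by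
  induction j generalizing X with
  | zero =>
    refine (Set.ncard_le_ncard (t := {X}) ?_).trans (by simp)
    rintro S ⟨hXS, -, -, hS⟩
    exact (Set.eq_of_subset_of_ncard_le hXS hS).symm
  | succ j ih =>
    by_cases hX : ArcCover A Y Z X
    · refine (Set.ncard_le_ncard (t := {X}) ?_).trans (by simpa using Nat.one_le_two_pow)
      rintro S ⟨hXS, -, hmin, -⟩
      exact (hmin X hXS hX).symm
    · unfold ArcCover at hX
      push Not at hX
      obtain ⟨y, hy, z, hz, hzy, hyX, hzX⟩ := hX
      have hsplit := Set.ncard_le_ncard (s := {S : Set V | X ⊆ S ∧ ArcCover A Y Z S ∧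
          (∀ S' ⊆ S, ArcCover A Y Z S' → S' = S) ∧ S.ncard ≤ X.ncard + (j + 1)})
        (t := {S : Set V | insert y X ⊆ S ∧ ArcCover A Y Z S ∧
          (∀ S' ⊆ S, ArcCover A Y Z S' → S' = S) ∧ S.ncard ≤ (insert y X).ncard + j} ∪
          {S : Set V | insert z X ⊆ S ∧ ArcCover A Y Z S ∧
          (∀ S' ⊆ S, ArcCover A Y Z S' → S' = S) ∧ S.ncard ≤ (insert z X).ncard + j}) (by
        rintro S ⟨hXS, hcov, hmin, hS⟩
        rcases hcov y hy z hz hzy with h | h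
        · refine Or.inl ⟨Set.insert_subset h hXS, hcov, hmin, ?_⟩
          rw [Set.ncard_insert_of_notMem hyX]
          omega
        · refine Or.inr ⟨Set.insert_subset h hXS, hcov, hmin, ?_⟩
          rw [Set.ncard_insert_of_notMem hzX]
          omega)
      have hunion := hsplit.trans (Set.ncard_union_le _ _)
      have h1 := ih (insert y X)
      have h2 := ih (insert z X)
      rw [pow_succ]
      omega

namespace TValid

variable {V : Type*} [Fintype V] {A : V → V → Prop} {k t : ℕ} {Y Z S : Set V}

theorem compl_eq (h : TValid A k t Y Z S) : Z = Yᶜ := by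
  obtain ⟨hunion, hdisj, -⟩ := h
  exact (IsCompl.compl_eq ⟨hdisj, codisjoint_iff.2 hunion⟩).symm

theorem ncard_right (h : TValid A k t Y Z S) : Z.ncard = Fintype.card V - t := by
  have hY := Set.ncard_add_ncard_compl Y
  rw [← h.compl_eq, h.2.2.1, Nat.card_eq_fintype_card] at hY
  omega

theorem mem_left_of_lt_outDeg (h : TValid A k t Y Z S) {x : V}
    (hx : Fintype.card V - t + k < outDeg A x) : x ∈ Y := by
  by_contra hxY
  have hxS : x ∉ S := fun hS => hxY (h.2.2.2.2.2.2.1 x hS hx)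
  have hxZ : x ∈ Z := h.compl_eq ▸ hxY
  have hsub : {u | A x u} ⊆ Z ∪ S := by
    intro u hu
    by_cases huY : u ∈ Y
    · exact Or.inr ((h.2.2.2.1 u huY x hxZ hu).resolve_right hxS)
    · exact Or.inl (h.compl_eq ▸ huY)
  have h1 := (Set.ncard_le_ncard hsub).trans (Set.ncard_union_le _ _)
  have h2 := h.ncard_right
  have h3 := h.2.2.2.2.2.1
  unfold outDeg at hx
  omega

theorem mem_right_of_lt_inDeg (h : TValid A k t Y Z S) {x : V}
    (hx : t + k < inDeg A x) : x ∈ Z := by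
  by_contra hxZ
  have hxS : x ∉ S := fun hS => hxZ (h.2.2.2.2.2.2.2 x hS hx)
  have hxY : x ∈ Y := by
    rw [h.compl_eq] at hxZ
    exact not_not.1 hxZ
  have hsub : {u | A u x} ⊆ Y ∪ S := by
    intro u hu
    by_cases huY : u ∈ Y
    · exact Or.inl huY
    · exact Or.inr ((h.2.2.2.1 x hxY u (h.compl_eq ▸ huY) hu).resolve_left hxS)
  have h1 := (Set.ncard_le_ncard hsub).trans (Set.ncard_union_le _ _)
  have h2 := h.2.2.1
  have h3 := h.2.2.2.2.2.1
  unfold inDeg at hx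
  omega

/-- Only few vertices have their side left undetermined by their degrees. -/
theorem ncard_undetermined_le (hA : Semicomplete A) (h : TValid A k t Y Z S) :
    {x | outDeg A x ≤ Fintype.card V - t + k ∧ inDeg A x ≤ t + k}.ncard ≤ 7 * k + 2 := by
  set U := {x | outDeg A x ≤ Fintype.card V - t + k ∧ inDeg A x ≤ t + k}
  have hZ := h.ncard_right
  have hcompl := h.compl_eq
  obtain ⟨-, hdisj, hY, hcov, -, hS, -, -⟩ := h
  have hdom : ∀ y ∈ Y \ S, ∀ z ∈ Z \ S, A y z := by
    intro y hy z hz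
    refine (hA.2 y z (hdisj.ne_of_mem hy.1 hz.1)).resolve_right fun hzy => ?_
    exact (hcov y hy.1 z hz.1 hzy).elim hy.2 hz.2
  have hleft : ((U ∩ Y) \ S).ncard + 2 * (Z \ S).ncard ≤ 2 * (Z.ncard + k) + 1 := by
    rcases ((U ∩ Y) \ S).eq_empty_or_nonempty with hW | hW
    · have := Set.ncard_le_ncard (Set.sdiff_subset : Z \ S ⊆ Z)
      rw [hW, Set.ncard_empty]
      omega
    · refine hA.ncard_le_of_dominates hW
        (hdisj.mono (fun x hx => hx.1.2) Set.sdiff_subset)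
        (fun y hy z hz => hdom y ⟨hy.1.2, hy.2⟩ z hz) fun y hy => ?_
      rw [hZ]
      exact hy.1.1.1
  have hright : ((U ∩ Z) \ S).ncard + 2 * (Y \ S).ncard ≤ 2 * (Y.ncard + k) + 1 := by
    rcases ((U ∩ Z) \ S).eq_empty_or_nonempty with hW | hW
    · have := Set.ncard_le_ncard (Set.sdiff_subset : Y \ S ⊆ Y)
      rw [hW, Set.ncard_empty]
      omega
    · refine hA.flip.ncard_le_of_dominates hW
        (hdisj.symm.mono (fun x hx => hx.1.2) Set.sdiff_subset)
        (fun z hz y hy => hdom y hy z ⟨hz.1.2, hz.2⟩) fun z hz => ?_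
      rw [hY]
      exact hz.1.1.2
  have hU : U ⊆ S ∪ ((U ∩ Y) \ S ∪ (U ∩ Z) \ S) := by
    intro x hx
    rw [hcompl]
    by_cases hxS : x ∈ S <;> by_cases hxY : x ∈ Y <;> simp [*]
  have h1 := Set.ncard_le_ncard hU
  have h2 := Set.ncard_union_le S ((U ∩ Y) \ S ∪ (U ∩ Z) \ S)
  have h3 := Set.ncard_union_le ((U ∩ Y) \ S) ((U ∩ Z) \ S)
  have h4 := Set.ncard_inter_add_ncard_sdiff_eq_ncard Y S
  have h5 := Set.ncard_inter_add_ncard_sdiff_eq_ncard Z S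
  have h6 : (Y ∩ S).ncard + (Z ∩ S).ncard ≤ S.ncard := by
    rw [← Set.ncard_union_eq (hdisj.mono Set.inter_subset_left Set.inter_subset_left)]
    exact Set.ncard_le_ncard (Set.union_subset Set.inter_subset_right Set.inter_subset_right)
  omega

/-- The left part is determined by its intersection with the undetermined vertices. -/
theorem left_eq (h : TValid A k t Y Z S) :
    Y = Y ∩ {x | outDeg A x ≤ Fintype.card V - t + k ∧ inDeg A x ≤ t + k} ∪
      {x | Fintype.card V - t + k < outDeg A x} := by
  ext x
  constructor
  · intro hx
    by_cases hout : Fintype.card V - t + k < outDeg A x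
    · exact Or.inr hout
    · refine Or.inl ⟨hx, not_lt.1 hout, not_lt.1 fun hin => ?_⟩
      exact Set.disjoint_left.1 h.2.1 hx (h.mem_right_of_lt_inDeg hin)
  · rintro (hx | hx)
    · exact hx.1
    · exact h.mem_left_of_lt_outDeg hx

end TValid

/-- for `1 ≤ t ≤ n`, there are at most `2 ^ (8k + 2)` `t`-valid triples. -/
theorem statement_7 {V : Type*} [Fintype V] (A : V → V → Prop) (hA : Semicomplete A)
    (k t : ℕ) (ht1 : 1 ≤ t) (ht2 : t ≤ Fintype.card V) :
    {T : Set V × Set V × Set V | TValid A k t T.1 T.2.1 T.2.2}.ncard ≤ 2 ^ (8 * k + 2) := by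
  classical
  rcases Set.eq_empty_or_nonempty
    {T : Set V × Set V × Set V | TValid A k t T.1 T.2.1 T.2.2} with hempty | ⟨T₀, hT₀⟩
  · simp [hempty]
  have hU := TValid.ncard_undetermined_le hA hT₀
  obtain ⟨F, hF⟩ := {T : Set V × Set V × Set V |
    TValid A k t T.1 T.2.1 T.2.2}.toFinite.exists_finset_coe
  have hmem : ∀ T ∈ F, TValid A k t T.1 T.2.1 T.2.2 := fun T hT => by
    have : T ∈ (F : Set (Set V × Set V × Set V)) := hT
    rwa [hF] at this
  rw [← hF, Set.ncard_coe_finset]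
  set U := {x | outDeg A x ≤ Fintype.card V - t + k ∧ inDeg A x ≤ t + k}
  have himage : (F.image fun T => T.1 ∩ U).card ≤ 2 ^ (7 * k + 2) := by
    rw [← Set.ncard_coe_finset]
    refine (Set.ncard_le_ncard (t := 𝒫 U) ?_).trans ?_
    · intro B hB
      obtain ⟨T, -, rfl⟩ := Finset.mem_image.1 hB
      exact Set.inter_subset_right
    · rw [Set.ncard_powerset]
      exact Nat.pow_le_pow_right two_pos hU
  have hfiber : ∀ B ∈ F.image fun T => T.1 ∩ U,
      (F.filter fun T => T.1 ∩ U = B).card ≤ 2 ^ k := by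
    intro B _
    set Y := B ∪ {x | Fintype.card V - t + k < outDeg A x} with hYdef
    have hparts : ∀ T ∈ F.filter fun T => T.1 ∩ U = B, T.1 = Y ∧ T.2.1 = Yᶜ := by
      intro T hT
      obtain ⟨hTF, hTB⟩ := Finset.mem_filter.1 hT
      have hTY : T.1 = Y := by
        rw [hYdef, ← hTB]
        exact (hmem T hTF).left_eq
      exact ⟨hTY, hTY ▸ (hmem T hTF).compl_eq⟩
    refine le_trans ?_ (ncard_minimal_arcCover_le A Y Yᶜ k ∅)
    rw [← Set.ncard_coe_finset]
    refine Set.ncard_le_ncard_of_injOn (fun T => T.2.2) ?_ ?_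
    · intro T hT
      obtain ⟨hTY, hTZ⟩ := hparts T hT
      obtain ⟨-, -, -, hcov, hmin, hS, -⟩ := hmem T (Finset.mem_filter.1 hT).1
      rw [hTY, hTZ] at hcov hmin
      exact ⟨Set.empty_subset _, hcov, hmin, by simpa using hS⟩
    · intro T hT T' hT' heq
      obtain ⟨hTY, hTZ⟩ := hparts T hT
      obtain ⟨hTY', hTZ'⟩ := hparts T' hT'
      exact Prod.ext (hTY.trans hTY'.symm) (Prod.ext (hTZ.trans hTZ'.symm) heq)
  calc F.card ≤ 2 ^ k * (F.image fun T => T.1 ∩ U).card :=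
        Finset.card_le_mul_card_image F _ hfiber
    _ ≤ 2 ^ k * 2 ^ (7 * k + 2) := Nat.mul_le_mul_left _ himage
    _ = 2 ^ (8 * k + 2) := by rw [← pow_add]; congr 1; ring
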